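/- Let F be a field and A an F-subalgebra of M_n(F) that does not satisfy the standard polynomial s_{2n-2}. Then there exists an invertible matrix Q ∈ M_n(F) and positive integers ℓ_1,...,ℓ_t with ℓ_1+...+ℓ_t = n such that Q A Q^{-1} = E_{(ℓ_1,...,ℓ_t)}(F), the full block upper triangular matrix algebra. -/

import Mathlib

open Matrix

/-- The standard polynomial `s_d` evaluated at `x : Fin d → R`. -/
noncomputable def stdPoly {R : Type*} [Ring R] (d : ℕ) (x : Fin d → R) : R :=
  ∑ σ : Equiv.Perm (Fin d), ((Equiv.Perm.sign σ : ℤˣ) : ℤ) • (List.ofFn fun i => x (σ i)).prod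

/-- `cum ℓ k` is `ℓ 0 + ⋯ + ℓ (k-1)`, the index where the `k`-th block starts. -/
def cum {t : ℕ} (ℓ : Fin t → ℕ) (k : ℕ) : ℕ :=
  ∑ i : Fin t, if (i : ℕ) < k then ℓ i else 0

/-- Block upper triangular with respect to the block sizes `ℓ`. -/
def BlockUT {F : Type*} [Field F] {t n : ℕ} (ℓ : Fin t → ℕ) (M : Matrix (Fin n) (Fin n) F) :
    Prop :=
  ∀ i j : Fin n, (∃ k : ℕ, (j : ℕ) < cum ℓ k ∧ cum ℓ k ≤ (i : ℕ)) → M i j = 0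

section charpolyPart
open Polynomial

theorem al_derivative_charpoly {R m : Type*} [CommRing R] [Fintype m] [DecidableEq m]
    (M : Matrix m m R) :
    derivative M.charpoly = (adjugate (charmatrix M)).trace := by
  rw [Matrix.charpoly, det_apply, derivative_sum, Matrix.trace]
  have h1 : ∀ i, (adjugate (charmatrix M)).diag i
      = ∑ σ : Equiv.Perm m, Equiv.Perm.sign σ •
        ((∏ j ∈ Finset.univ.erase i, charmatrix M (σ j) j) * derivative (charmatrix M (σ i) i)) := by
    intro i
    have h0 : (adjugate (charmatrix M)).diag i
        = ((charmatrix M).updateCol i (Pi.single i 1)).det := by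
      have := congrFun (congrFun (adjugate_transpose (charmatrix M)) i) i
      rw [adjugate_apply, updateRow_transpose, det_transpose] at this
      exact this
    rw [h0, det_apply]
    refine Finset.sum_congr rfl fun σ _ => ?_
    congr 1
    rw [← Finset.prod_erase_mul _ _ (Finset.mem_univ i)]
    congr 1
    · refine Finset.prod_congr rfl fun j hj => ?_
      rw [updateCol_ne (Finset.ne_of_mem_erase hj)]
    · rw [updateCol_self]
      by_cases h : σ i = i
      · rw [h, charmatrix_apply_eq]; simp
      · rw [charmatrix_apply_ne _ _ _ h]; simp [h]
  simp_rw [h1]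
  rw [Finset.sum_comm]
  refine Finset.sum_congr rfl fun σ _ => ?_
  rw [← Finset.smul_sum, Units.smul_def, Units.smul_def, map_zsmul, derivative_prod_finset]

theorem al_charpoly_eq {R m : Type*} [CommRing R] [Algebra ℚ R] [Fintype m] [DecidableEq m]
    (M : Matrix m m R) (h : ∀ k, 0 < k → (M ^ k).trace = 0) :
    M.charpoly = X ^ Fintype.card m := by
  set p := Fintype.card m with hp
  set χ := M.charpoly with hχ
  set B := adjugate (charmatrix M) with hB
  let c : Matrix m m R →+* Matrix m m R[X] := (C : R →+* R[X]).mapMatrix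
  have hcm : charmatrix M = scalar m (X : R[X]) - c M := rfl
  have hcomm : Commute (scalar m (X : R[X])) (c M) := scalar_commute _ (fun _ => Commute.all _ _) _
  -- trace identity
  have key : ∀ k : ℕ, X ^ (k+1) * derivative χ - (B * c (M ^ (k+1))).trace = (p : R[X]) * X ^ k * χ := by
    intro k
    have e1 : charmatrix M * (∑ i ∈ Finset.range (k+1), scalar m (X : R[X]) ^ i * c M ^ (k + 1 - 1 - i))
        = scalar m (X : R[X]) ^ (k+1) - c M ^ (k+1) := by
      rw [hcm]; exact hcomm.mul_geom_sum₂ (k+1)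
    have e2 := congrArg (fun Z => (B * Z).trace) e1
    simp only [← mul_assoc] at e2
    rw [hB, adjugate_mul, mul_sub, trace_sub, ← hB] at e2
    rw [← map_pow c] at e2
    have e3 : (B * scalar m (X : R[X]) ^ (k+1)).trace = X ^ (k+1) * derivative χ := by
      rw [hχ, al_derivative_charpoly, ← map_pow, ← (scalar_commute _ (fun _ => Commute.all _ _) B).eq,
        scalar_apply, ← smul_eq_diagonal_mul, trace_smul, smul_eq_mul]
    rw [e3] at e2
    rw [← e2]
    change ((charpoly M • 1) * _ : Matrix m m R[X]).trace = _
    rw [smul_mul_assoc, one_mul, trace_smul, trace_sum, Finset.sum_range_succ, Finset.sum_eq_zero]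
    · simp only [← map_pow, scalar_apply, zero_add, smul_eq_mul]
      rw [Nat.add_sub_cancel, Nat.sub_self, pow_zero, map_one, mul_one, diagonal_pow, trace_diagonal]
      simp only [Pi.pow_apply, Finset.sum_const, Finset.card_univ, nsmul_eq_mul]
      rw [← hp, ← hχ]
      ring
    · intro i hi
      have hi := Finset.mem_range.1 hi
      rw [← map_pow, scalar_apply, ← smul_eq_diagonal_mul, trace_smul, ← map_pow c]
      have : (c (M ^ (k + 1 - 1 - i))).trace = C ((M ^ (k + 1 - 1 - i)).trace) := by
        simp [c, trace, diag]
      rw [this, h _ (by omega)]; simp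
  -- degree bound
  obtain ⟨d, hd⟩ : ∃ d, ∀ i j, (B i j).natDegree ≤ d :=
    ⟨Finset.univ.sup fun i => Finset.univ.sup fun j => (B i j).natDegree, fun i j =>
      (Finset.le_sup (f := fun j => (B i j).natDegree) (Finset.mem_univ j)).trans
        (Finset.le_sup (f := fun i => Finset.univ.sup fun j => (B i j).natDegree) (Finset.mem_univ i))⟩
  have hdeg : ∀ N : Matrix m m R, ((B * c N).trace).natDegree ≤ d := by
    intro N
    refine natDegree_sum_le_of_forall_le _ _ fun i _ => ?_
    rw [diag_apply, mul_apply]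
    refine natDegree_sum_le_of_forall_le _ _ fun j _ => ?_
    exact (natDegree_mul_C_le _ _).trans (hd _ _)
  have hc : ∀ k, k ≠ p → χ.coeff k = 0 := by
    intro k hk
    have := congrArg (fun q => q.coeff (k + (d + 1))) (key (d+1))
    simp only [coeff_sub] at this
    rw [coeff_eq_zero_of_natDegree_lt (lt_of_le_of_lt (hdeg _) (by omega)), sub_zero,
      mul_assoc, ← C_eq_natCast, coeff_C_mul, coeff_X_pow_mul] at this
    cases k with
    | zero =>
      rw [coeff_X_pow_mul', if_neg (by omega)] at this
      have h2 := congrArg (fun z => ((p : ℚ)⁻¹) • z) this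
      simp only [smul_zero] at h2
      have hp0 : (p : ℚ) ≠ 0 := by exact_mod_cast (Ne.symm hk)
      rw [← nsmul_eq_mul, ← Nat.cast_smul_eq_nsmul ℚ, smul_smul, inv_mul_cancel₀ hp0, one_smul] at h2
      exact h2.symm
    | succ k =>
      rw [show k + 1 + (d + 1) = k + (d + 1 + 1) by ring, coeff_X_pow_mul, coeff_derivative] at this
      have h1 : ((k + 1 : ℚ) - p) • χ.coeff (k+1) = 0 := by
        rw [sub_smul, sub_eq_zero]
        rw [Nat.cast_smul_eq_nsmul ℚ, nsmul_eq_mul, ← this, Algebra.smul_def]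
        simp [mul_comm]
      have h2 : ((k + 1 : ℚ) - p) ≠ 0 := by
        rw [sub_ne_zero]; exact_mod_cast hk
      have h3 := congrArg (fun z => ((k + 1 : ℚ) - p)⁻¹ • z) h1
      simp only [smul_zero] at h3
      rwa [smul_smul, inv_mul_cancel₀ h2, one_smul] at h3
  nontriviality R
  ext k
  rw [coeff_X_pow]
  split_ifs with hk
  · have := M.charpoly_monic.coeff_natDegree
    rw [charpoly_natDegree_eq_dim] at this
    rw [hk]; exact this
  · exact hc k hk

theorem al_pow_card {R m : Type*} [CommRing R] [Fintype m] [DecidableEq m]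
    (M : Matrix m m R) (h : M.charpoly = X ^ Fintype.card m) : M ^ Fintype.card m = 0 := by
  have := aeval_self_charpoly M
  rwa [h, map_pow, aeval_X] at this

theorem al_sandwich {R m : Type*} [CommRing R] [Fintype m] [DecidableEq m]
    (M : Matrix m m R) (p : ℕ) (hp : Fintype.card m = p + 1)
    (h : M.charpoly = X ^ (p + 1)) (W : Matrix m m R) :
    ∃ c : R, M ^ p * W * M ^ p = c • M ^ p := by
  let E := DualNumber R
  let ii : R →+* E := TrivSqZeroExt.inlHom R R
  let i : Matrix m m R →+* Matrix m m E := ii.mapMatrix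
  let ε : E := DualNumber.eps
  have hε : ε * ε = 0 := DualNumber.eps_mul_eps
  let N : Matrix m m E := i M + ε • i W
  have hM : i M ^ (p+1) = 0 := by
    rw [← map_pow, ← hp, al_pow_card M (by rw [h, hp]), map_zero]
  have hεN : ε • N = ε • i M := by
    simp only [N, smul_add, smul_smul, hε, zero_smul, add_zero]
  have hεNk : ∀ k, ε • N ^ k = ε • i M ^ k := by
    intro k
    induction k with
    | zero => simp
    | succ k ih => rw [pow_succ, ← smul_mul_assoc, ih, smul_mul_assoc, ← mul_smul_comm, hεN,
        mul_smul_comm, pow_succ]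
  have hAN : i M ^ p * N = ε • (i M ^ p * i W) := by
    simp only [N, mul_add, ← pow_succ, hM, zero_add, mul_smul_comm]
  have hANk : ∀ k, i M ^ p * N ^ (k+1) = ε • (i M ^ p * i W * i M ^ k) := by
    intro k
    rw [pow_succ', ← mul_assoc, hAN, smul_mul_assoc, ← mul_smul_comm, hεNk, mul_smul_comm]
  have hCH := congrArg (fun Z => i M ^ p * Z) (aeval_self_charpoly N)
  simp only [mul_zero] at hCH
  nontriviality R
  have hfst : ∀ k, TrivSqZeroExt.fst (N.charpoly.coeff k) = if k = p + 1 then 1 else 0 := by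
    intro k
    let f : E →+* R := (TrivSqZeroExt.fstHom R R R).toRingHom
    have : (N.charpoly).map f = M.charpoly := by
      rw [← charpoly_map]
      congr 1
      ext a b
      have e1 : f ε = 0 := rfl
      have e2 : ∀ r, f (ii r) = r := fun r => rfl
      change f (ii (M a b) + ε * ii (W a b)) = M a b
      rw [map_add, map_mul, e1, e2, zero_mul, add_zero]
    have h2 := congrArg (fun q => q.coeff k) this
    simp only [coeff_map, h, coeff_X_pow] at h2
    exact h2
  rw [aeval_eq_sum_range, charpoly_natDegree_eq_dim, hp, Finset.sum_range_succ', mul_add,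
    Finset.mul_sum, Finset.sum_range_succ, Finset.sum_eq_zero, zero_add] at hCH
  · rw [mul_smul_comm, hANk, pow_zero, mul_smul_comm, mul_one] at hCH
    have hlead : N.charpoly.coeff (p+1) = 1 := by
      have := N.charpoly_monic.coeff_natDegree
      rwa [charpoly_natDegree_eq_dim, hp] at this
    rw [hlead, one_smul] at hCH
    refine ⟨- TrivSqZeroExt.snd (N.charpoly.coeff 0), ?_⟩
    ext a b
    have h3 := congrArg (fun Z : Matrix m m E => TrivSqZeroExt.snd (Z a b)) hCH
    rw [← map_pow, ← map_mul, ← map_mul] at h3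
    have h4 : TrivSqZeroExt.snd (ε * ii ((M ^ p * W * M ^ p) a b)
        + N.charpoly.coeff 0 * ii ((M ^ p) a b)) = 0 := h3
    rw [TrivSqZeroExt.snd_add, TrivSqZeroExt.snd_mul, TrivSqZeroExt.snd_mul] at h4
    have e2 : ∀ r, (ii r).fst = r := fun r => rfl
    have e3 : ∀ r, (ii r).snd = 0 := fun r => rfl
    simp [ε, e2, e3] at h4
    rw [Matrix.smul_apply, smul_eq_mul, neg_mul, ← add_eq_zero_iff_eq_neg]
    exact h4
  · intro k hk
    have hk := Finset.mem_range.1 hk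
    rw [mul_smul_comm, hANk, smul_smul]
    have : N.charpoly.coeff (k+1) * ε = 0 := by
      apply TrivSqZeroExt.ext
      · rw [TrivSqZeroExt.fst_mul, hfst, if_neg (by omega), zero_mul]; rfl
      · rw [TrivSqZeroExt.snd_mul, hfst, if_neg (by omega)]
        simp [ε]
    rw [this, zero_smul]

end charpolyPart

section superPart
set_option linter.unusedSectionVars false

/-- The (abstract) odd part of a superalgebra. -/
structure OddPart (G : Type*) [Ring G] [Algebra ℚ G] where
  O : AddSubgroup G
  anti : ∀ x ∈ O, ∀ y ∈ O, x * y = -(y * x)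
  mul_mem : ∀ x ∈ O, ∀ y ∈ O, x * y ∈ Subalgebra.center ℚ G
  smul_mem : ∀ c ∈ Subalgebra.center ℚ G, ∀ x ∈ O, c * x ∈ O

variable {G : Type*} [Ring G] [Algebra ℚ G] (P : OddPart G)
variable {l m n : Type*} [Fintype l] [Fintype m] [Fintype n] [DecidableEq l] [DecidableEq m]
  [DecidableEq n]

/-- all entries odd -/
def OddPart.EO {l m : Type*} (A : Matrix l m G) : Prop := ∀ i j, A i j ∈ P.O

/-- all entries central -/
def EC {l m : Type*} (A : Matrix l m G) : Prop := ∀ i j, A i j ∈ Subalgebra.center ℚ G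

theorem OddPart.mul_OO {A : Matrix l m G} {B : Matrix m n G} (hA : P.EO A) (hB : P.EO B) :
    EC (A * B) := fun i j => by
  rw [mul_apply]; exact sum_mem fun k _ => P.mul_mem _ (hA _ _) _ (hB _ _)

theorem OddPart.mul_CO {A : Matrix l m G} {B : Matrix m n G} (hA : EC A) (hB : P.EO B) :
    P.EO (A * B) := fun i j => by
  rw [mul_apply]; exact sum_mem fun k _ => P.smul_mem _ (hA _ _) _ (hB _ _)

theorem EC_mul {A : Matrix l m G} {B : Matrix m n G} (hA : EC A) (hB : EC B) :
    EC (A * B) := fun i j => by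
  rw [mul_apply]; exact sum_mem fun k _ => mul_mem (hA _ _) (hB _ _)

theorem EC_one : EC (1 : Matrix m m G) := fun i j => by
  rw [one_apply]; split_ifs
  · exact one_mem _
  · exact zero_mem _

theorem EC_pow {A : Matrix m m G} (hA : EC A) (k : ℕ) : EC (A ^ k) := by
  induction k with
  | zero => rw [pow_zero]; exact EC_one
  | succ k ih => rw [pow_succ]; exact EC_mul ih hA

theorem OddPart.pow_even {A : Matrix m m G} (hA : P.EO A) (k : ℕ) : EC (A ^ (2 * k)) := by
  rw [pow_mul, pow_two]; exact EC_pow (P.mul_OO hA hA) k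

theorem OddPart.pow_odd {A : Matrix m m G} (hA : P.EO A) (k : ℕ) : P.EO (A ^ (2 * k + 1)) := by
  rw [pow_succ]; exact P.mul_CO (P.pow_even hA k) hA

theorem OddPart.exists_even {a : Matrix m m G} (ha : P.EO a) :
    ∃ M : Matrix m m (Subalgebra.center ℚ G),
      (∀ k, a ^ (2 * k) = (M ^ k).map (Subalgebra.center ℚ G).val) ∧
      M.charpoly = Polynomial.X ^ Fintype.card m := by
  let M : Matrix m m (Subalgebra.center ℚ G) := fun i j => ⟨(a ^ 2) i j, P.pow_even ha 1 i j⟩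
  let v : Matrix m m (Subalgebra.center ℚ G) →+* Matrix m m G :=
    (Subalgebra.center ℚ G).val.toRingHom.mapMatrix
  have hv : v M = a ^ 2 := rfl
  have hk : ∀ k, a ^ (2 * k) = v (M ^ k) := fun k => by rw [map_pow, hv, pow_mul]
  refine ⟨M, hk, al_charpoly_eq M ?_⟩
  intro k hk0
  obtain ⟨k, rfl⟩ : ∃ j, k = j + 1 := ⟨k - 1, by omega⟩
  have h1 : (a ^ (2 * (k+1))).trace = -(a ^ (2 * (k+1))).trace := by
    have e : 2 * (k+1) = 2 * k + 1 + 1 := by ring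
    conv_lhs => rw [e, pow_succ]
    conv_rhs => rw [e, pow_succ']
    simp only [trace, diag_apply, mul_apply]
    rw [Finset.sum_comm, ← Finset.sum_neg_distrib]
    refine Finset.sum_congr rfl fun i _ => ?_
    rw [← Finset.sum_neg_distrib]
    refine Finset.sum_congr rfl fun j _ => ?_
    exact P.anti _ (P.pow_odd ha k _ _) _ (ha _ _)
  have h2 : (a ^ (2 * (k+1))).trace = 0 := by
    have h3 : (2 : ℚ) • (a ^ (2 * (k+1))).trace = 0 := by
      rw [two_smul]; nth_rewrite 1 [h1]; simp
    have := congrArg (fun z => (2 : ℚ)⁻¹ • z) h3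
    simpa using this
  apply Subtype.ext
  rw [hk] at h2
  rw [← Subalgebra.coe_val, Matrix.trace, map_sum]
  exact h2

theorem OddPart.pow_zero {a : Matrix m m G} (ha : P.EO a) {k : ℕ} (hk : 2 * Fintype.card m ≤ k) :
    a ^ k = 0 := by
  obtain ⟨M, hM, hc⟩ := P.exists_even ha
  have : a ^ (2 * Fintype.card m) = 0 := by
    rw [hM, al_pow_card M hc]
    ext i j; simp
  exact pow_eq_zero_of_le hk this

theorem OddPart.sandwich {a : Matrix m m G} (ha : P.EO a) {p : ℕ} (hp : Fintype.card m = p + 1) :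
    ∃ c : m → m → Subalgebra.center ℚ G, ∀ W : Matrix m m G,
      a ^ (2 * p) * W * a ^ (2 * p) = (∑ k, ∑ l, W k l * (c k l : G)) • a ^ (2 * p) := by
  obtain ⟨M, hM, hc⟩ := P.exists_even ha
  rw [hp] at hc
  choose c hcc using fun k l => al_sandwich M p hp hc (Matrix.single k l 1)
  refine ⟨c, fun W => ?_⟩
  rw [hM]
  set A := M ^ p with hA
  ext i j
  have hkl : ∀ k l, (A i k * A l j : Subalgebra.center ℚ G) = c k l * A i j := by
    intro k l
    have := congrFun (congrFun (hcc k l) i) j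
    rw [Matrix.smul_apply, smul_eq_mul] at this
    rw [← this, mul_apply, Finset.sum_eq_single l]
    · rw [mul_single_apply_same, mul_one]
    · intro b _ hb
      rw [mul_single_apply_of_ne _ _ _ _ _ hb, zero_mul]
    · simp
  simp only [Matrix.smul_apply, smul_eq_mul, mul_apply, map_apply, Finset.sum_mul]
  rw [Finset.sum_comm]
  refine Finset.sum_congr rfl fun k _ => Finset.sum_congr rfl fun l _ => ?_
  have h1 := congrArg (Subtype.val) (hkl k l)
  simp only [MulMemClass.coe_mul] at h1
  rw [mul_assoc (W k l)]
  change (A i k : G) * W k l * (A l j : G) = W k l * ((c k l : G) * (A i j : G))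
  rw [← h1, ← (Subalgebra.mem_center_iff.1 (A i k).2 (W k l)), mul_assoc]

theorem pow_fromBlocks_ut (A : Matrix l l G) (B : Matrix l n G)
    (D : Matrix n n G) (N : ℕ) :
    fromBlocks A B 0 D ^ N =
      fromBlocks (A ^ N) (∑ j ∈ Finset.range N, A ^ j * B * D ^ (N - 1 - j)) 0 (D ^ N) := by
  induction N with
  | zero => simp
  | succ N ih =>
    rw [pow_succ', ih, fromBlocks_multiply, Finset.sum_range_succ']
    simp only [Matrix.zero_mul, Matrix.mul_zero, add_zero, Finset.sum_const_zero, zero_add, ← pow_succ', Matrix.mul_sum]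
    congr 1
    congr 1
    · refine Finset.sum_congr rfl fun j hj => ?_
      rw [← Matrix.mul_assoc, ← Matrix.mul_assoc, ← pow_succ', show N + 1 - 1 - (j + 1) = N - 1 - j by omega]
    · simp

/-- The linked matrix. -/
def linkMat {G l n : Type*} [Zero G] (a : Matrix l l G) (b : Matrix n n G) (x : Matrix l n G)
    (y : Matrix n l G) (z : Matrix l l G) : Matrix (l ⊕ (n ⊕ l)) (l ⊕ (n ⊕ l)) G :=
  fromBlocks a (fromCols x z) 0 (fromBlocks b y 0 a)

theorem OddPart.link_pow {a : Matrix l l G} {b : Matrix n n G} {x : Matrix l n G}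
    {y : Matrix n l G} {z : Matrix l l G} (ha : P.EO a) (hb : P.EO b) (hx : P.EO x) (hy : P.EO y)
    (hz : P.EO z) {p q : ℕ} (hp : Fintype.card l = p + 1) (hq : Fintype.card n = q) :
    linkMat a b x y z ^ (4 * p + 2 * q + 2) = 0 := by
  set N := 4 * p + 2 * q + 2 with hN
  have a0 : ∀ k, 2 * p + 2 ≤ k → a ^ k = 0 := fun k hk => P.pow_zero ha (by omega)
  have b0 : ∀ k, 2 * q ≤ k → b ^ k = 0 := fun k hk => P.pow_zero hb (by omega)
  rw [linkMat, pow_fromBlocks_ut]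
  simp only [pow_fromBlocks_ut]
  rw [a0 N (by omega), b0 N (by omega)]
  have hY : ∑ j ∈ Finset.range N, b ^ j * y * a ^ (N - 1 - j) = 0 := by
    refine Finset.sum_eq_zero fun j hj => ?_
    have hj := Finset.mem_range.1 hj
    by_cases h : 2 * q ≤ j
    · rw [b0 j h, Matrix.zero_mul, Matrix.zero_mul]
    · rw [a0 (N - 1 - j) (by omega), Matrix.mul_zero]
  rw [hY]
  have hS : ∑ j ∈ Finset.range N, a ^ j * x * b ^ (N - 1 - j) = 0 := by
    refine Finset.sum_eq_zero fun j hj => ?_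
    have hj := Finset.mem_range.1 hj
    by_cases h : 2 * p + 2 ≤ j
    · rw [a0 j h, Matrix.zero_mul, Matrix.zero_mul]
    · rw [b0 (N - 1 - j) (by omega), Matrix.mul_zero]
  let T : ℕ → Matrix l l G := fun k => match k with
    | 0 => 0
    | 1 => z
    | j + 2 => x * b ^ j * y
  have hT0 : ∀ k, 2 * q + 2 ≤ k → T k = 0 := by
    intro k hk
    obtain ⟨j, rfl⟩ : ∃ j, k = j + 2 := ⟨k - 2, by omega⟩
    simp only [T]
    rw [b0 j (by omega), Matrix.mul_zero, Matrix.zero_mul]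
  have hU : ∑ j ∈ Finset.range N, a ^ j * (x * (∑ i ∈ Finset.range (N - 1 - j),
      b ^ i * y * a ^ (N - 1 - j - 1 - i)) + z * a ^ (N - 1 - j)) = 0 := by
    have e1 : ∀ j ∈ Finset.range N, a ^ j * (x * (∑ i ∈ Finset.range (N - 1 - j),
        b ^ i * y * a ^ (N - 1 - j - 1 - i)) + z * a ^ (N - 1 - j))
        = ∑ k ∈ Finset.range (N + 1 - j), a ^ j * T k * a ^ (N - j - k) := by
      intro j hj
      have hj := Finset.mem_range.1 hj
      rw [show N + 1 - j = N - 1 - j + 1 + 1 by omega, Finset.sum_range_succ',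
        Finset.sum_range_succ']
      simp only [T, Matrix.mul_zero, Matrix.zero_mul, add_zero, Matrix.mul_add, Matrix.mul_sum]
      congr 1
      · refine Finset.sum_congr rfl fun i hi => ?_
        rw [show N - j - (i + 1 + 1) = N - 1 - j - 1 - i by omega]
        simp only [Matrix.mul_assoc]
      · rw [show N - j - (0 + 1) = N - 1 - j by omega]
        simp only [Matrix.mul_assoc]
    rw [Finset.sum_congr rfl e1]
    have t0 : ∀ i k, 2 * p + 2 ≤ i ∨ 2 * q + 2 ≤ k ∨ 2 * p + 2 ≤ N - i - k →
        a ^ i * T k * a ^ (N - i - k) = 0 := by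
      rintro i k (h | h | h)
      · rw [a0 i h, Matrix.zero_mul, Matrix.zero_mul]
      · rw [hT0 k h, Matrix.mul_zero, Matrix.zero_mul]
      · rw [a0 _ h, Matrix.mul_zero]
    rw [Finset.sum_eq_add (2 * p) (2 * p + 1) (by omega)]
    rotate_left
    · intro i hi hne
      have hi := Finset.mem_range.1 hi
      refine Finset.sum_eq_zero fun k hk => ?_
      have hk := Finset.mem_range.1 hk
      exact t0 i k (by omega)
    · intro h; exact absurd (Finset.mem_range.2 (by omega)) h
    · intro h; exact absurd (Finset.mem_range.2 (by omega)) h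
    rw [Finset.sum_eq_single (2 * q + 1)]
    rotate_left
    · intro k hk hne
      have hk := Finset.mem_range.1 hk
      exact t0 _ k (by omega)
    · intro h; exact absurd (Finset.mem_range.2 (by omega)) h
    rw [Finset.sum_eq_add (2 * q) (2 * q + 1) (by omega)]
    rotate_left
    · intro k hk hne
      have hk := Finset.mem_range.1 hk
      exact t0 _ k (by omega)
    · intro h; exact absurd (Finset.mem_range.2 (by omega)) h
    · intro h; exact absurd (Finset.mem_range.2 (by omega)) h
    have hTo : P.EO (T (2 * q + 1)) := by
      rcases q with _ | q
      · exact hz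
      · change P.EO (x * b ^ (2 * q + 1) * y)
        exact P.mul_CO (P.mul_OO hx (P.pow_odd hb q)) hy
    have hTe : EC (T (2 * q)) := by
      rcases q with _ | q
      · intro i j; exact zero_mem _
      · change EC (x * b ^ (2 * q) * y)
        have : P.EO (x * b ^ (2 * q)) := fun i j => by
          rw [mul_apply]
          refine sum_mem fun k _ => ?_
          rw [Subalgebra.mem_center_iff.1 (P.pow_even hb q k j)]
          exact P.smul_mem _ (P.pow_even hb q k j) _ (hx _ _)
        exact P.mul_OO this hy
    obtain ⟨c, hc⟩ := P.sandwich ha hp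
    rw [show N - 2 * p - (2 * q + 1) = 2 * p + 1 by omega,
      show N - (2 * p + 1) - 2 * q = 2 * p + 1 by omega,
      show N - (2 * p + 1) - (2 * q + 1) = 2 * p by omega]
    set A := a ^ (2 * p) with hA
    have r1 : a ^ (2 * p + 1) = A * a := pow_succ _ _
    have r2 : a ^ (2 * p + 1) = a * A := pow_succ' _ _
    have f1 : A * T (2 * q + 1) * a ^ (2 * p + 1) + a ^ (2 * p + 1) * T (2 * q + 1) * A = 0 := by
      have g1 : A * T (2 * q + 1) * a ^ (2 * p + 1) = (A * T (2 * q + 1) * A) * a := by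
        rw [r1]; simp only [Matrix.mul_assoc]
      have g2 : a ^ (2 * p + 1) * T (2 * q + 1) * A = a * (A * T (2 * q + 1) * A) := by
        rw [r2]; simp only [Matrix.mul_assoc]
      rw [g1, g2, hc]
      set Λ := ∑ k, ∑ l, T (2 * q + 1) k l * (c k l : G)
      have hΛ : Λ ∈ P.O := by
        refine sum_mem fun k _ => sum_mem fun l _ => ?_
        rw [Subalgebra.mem_center_iff.1 (c k l).2]
        exact P.smul_mem _ (c k l).2 _ (hTo _ _)
      have g3 : a * (Λ • A) = -(Λ • (a * A)) := by
        ext i j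
        simp only [Matrix.neg_apply, Matrix.smul_apply, mul_apply, smul_eq_mul, Finset.mul_sum,
          ← Finset.sum_neg_distrib]
        refine Finset.sum_congr rfl fun k _ => ?_
        rw [← mul_assoc, P.anti _ (ha i k) _ hΛ, neg_mul, mul_assoc]
      rw [g3, Matrix.smul_mul, ← r1, r2, add_neg_cancel]
    have f2 : a ^ (2 * p + 1) * T (2 * q) * a ^ (2 * p + 1) = 0 := by
      have g1 : a ^ (2 * p + 1) * T (2 * q) * a ^ (2 * p + 1) = a * (A * T (2 * q) * A) * a := by
        nth_rewrite 1 [r2]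
        rw [r1]; simp only [Matrix.mul_assoc]
      rw [g1, hc]
      set Λ := ∑ k, ∑ l, T (2 * q) k l * (c k l : G)
      have hΛ : Λ ∈ Subalgebra.center ℚ G :=
        sum_mem fun k _ => sum_mem fun l _ => MulMemClass.mul_mem (hTe _ _) (c k l).2
      have g3 : a * (Λ • A) = Λ • (a * A) := by
        ext i j
        simp only [Matrix.smul_apply, mul_apply, smul_eq_mul, Finset.mul_sum]
        refine Finset.sum_congr rfl fun k _ => ?_
        rw [← mul_assoc, Subalgebra.mem_center_iff.1 hΛ, mul_assoc]
      rw [g3, Matrix.smul_mul, ← r2, ← pow_succ, a0 _ (by omega), smul_zero]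
    rw [f2, zero_add, f1]
  have hW : ∑ j ∈ Finset.range N, a ^ j * fromCols x z *
      fromBlocks (b ^ (N - 1 - j)) (∑ i ∈ Finset.range (N - 1 - j),
        b ^ i * y * a ^ (N - 1 - j - 1 - i)) 0 (a ^ (N - 1 - j)) = 0 := by
    ext i j
    rcases j with j | j
    · have := congrFun (congrFun hS i) j
      rw [Matrix.sum_apply] at this ⊢
      refine Eq.trans ?_ this
      refine Finset.sum_congr rfl fun k _ => ?_
      rw [Matrix.mul_assoc, fromCols_mul_fromBlocks, Matrix.mul_assoc]
      simp [mul_fromCols, Matrix.mul_assoc]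
    · have := congrFun (congrFun hU i) j
      rw [Matrix.sum_apply] at this ⊢
      refine Eq.trans ?_ this
      refine Finset.sum_congr rfl fun k _ => ?_
      rw [Matrix.mul_assoc, fromCols_mul_fromBlocks]
      simp [mul_fromCols, Matrix.mul_assoc]
  rw [hW]
  simp

end superPart

section grassmann

theorem stdPoly_map {R S : Type*} [Ring R] [Ring S] (f : R →+* S) (d : ℕ) (x : Fin d → R) :
    f (stdPoly d x) = stdPoly d (fun i => f (x i)) := by
  simp only [stdPoly, map_sum, map_zsmul, map_list_prod, List.map_ofFn]
  rfl

variable {K : Type*} [CommRing K]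

/-- Grassmann algebra on `d` generators -/
abbrev Gr (K : Type*) [CommRing K] (d : ℕ) := ExteriorAlgebra K (Fin d → K)

/-- The generic odd matrix. -/
noncomputable def oddMat {l m : Type*} {d : ℕ} (x : Fin d → Matrix l m K) : Matrix l m (Gr K d) :=
  fun i j => ExteriorAlgebra.ι K (fun k => x k i j)

theorem pow_oddMat {m : Type*} [Fintype m] [DecidableEq m] {d : ℕ} (x : Fin d → Matrix m m K)
    (N : ℕ) (i j : m) :
    (oddMat x ^ N) i j = ∑ f : Fin N → Fin d,
      ((List.ofFn fun k => x (f k)).prod i j) •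
        ExteriorAlgebra.ιMulti K N (fun k => Pi.single (f k) (1 : K)) := by
  induction N generalizing i j with
  | zero =>
    simp [one_apply]
  | succ N ih =>
    rw [pow_succ', mul_apply, ← (Fin.consEquiv (fun _ : Fin (N+1) => Fin d)).sum_comp,
      Fintype.sum_prod_type]
    simp only [Fin.consEquiv_apply, ExteriorAlgebra.ιMulti_succ_apply, List.ofFn_succ,
      Fin.cons_zero, Fin.cons_succ, List.prod_cons, mul_apply, Finset.sum_smul]
    simp only [ih]
    have hx : ∀ a b, oddMat x a b = ∑ k, x k a b • ExteriorAlgebra.ι K (Pi.single k (1 : K)) := by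
      intro a b
      rw [oddMat]
      conv_lhs => rw [pi_eq_sum_univ' (fun k => x k a b)]
      simp
    simp only [hx, Finset.sum_mul, Finset.mul_sum]
    calc _ = ∑ c, ∑ k, ∑ f : Fin N → Fin d, (x k i c * (List.ofFn fun k => x (f k)).prod c j) •
            (ExteriorAlgebra.ι K (Pi.single k (1 : K)) *
            ExteriorAlgebra.ιMulti K N (fun k => Pi.single (f k) (1 : K))) := by
          simp only [smul_mul_smul_comm]
          refine Finset.sum_congr rfl fun c _ => ?_
          rw [Finset.sum_comm]
      _ = _ := by
          rw [Finset.sum_comm]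
          refine Finset.sum_congr rfl fun k _ => ?_
          rw [Finset.sum_comm]
          refine Finset.sum_congr rfl fun f _ => ?_
          refine Finset.sum_congr rfl fun c _ => ?_
          rfl

theorem stdPoly_of_pow {m : Type*} [Fintype m] [DecidableEq m] {d : ℕ} (x : Fin d → Matrix m m K)
    (h : oddMat x ^ d = 0) : stdPoly d x = 0 := by
  ext i j
  have h1 := congrFun (congrFun h i) j
  rw [pow_oddMat] at h1
  let φ : Gr K d →ₗ[K] K := ExteriorAlgebra.liftAlternating
    (fun n => if h : n = d then
      (Matrix.detRowAlternating (R := K) (n := Fin d)).domDomCongr (finCongr h.symm) else 0)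
  have hφ : ∀ v, φ (ExteriorAlgebra.ιMulti K d v) = Matrix.det (of v) := by
    intro v
    simp only [φ]
    rw [ExteriorAlgebra.liftAlternating_apply_ιMulti, dif_pos rfl]
    rfl
  have h2 := congrArg φ h1
  simp only [map_sum, map_smul, hφ] at h2
  rw [stdPoly, Matrix.sum_apply]
  refine Eq.trans ?_ (h2.trans (map_zero φ))
  symm
  rw [← Finset.sum_subset (Finset.subset_univ (Finset.univ.image
    (fun σ : Equiv.Perm (Fin d) => (σ : Fin d → Fin d)))), Finset.sum_image]
  · refine Finset.sum_congr rfl fun σ _ => ?_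
    have : (of fun k => Pi.single (σ k) (1 : K)) = (σ.permMatrix K : Matrix (Fin d) (Fin d) K) := by
      ext a b
      simp [Equiv.Perm.permMatrix, PEquiv.toMatrix_apply, Pi.single_apply, eq_comm]
    rw [this, Matrix.det_permutation]
    simp [mul_comm]
  · intro a _ b _ hab
    exact Equiv.ext (congrFun hab)
  · intro f _ hf
    have : ¬ Function.Injective f := by
      intro hinj
      exact hf (Finset.mem_image.2 ⟨Equiv.ofBijective f (Finite.injective_iff_bijective.1 hinj),
        Finset.mem_univ _, rfl⟩)
    rw [Function.Injective] at this
    push Not at this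
    obtain ⟨a, b, hab, hne⟩ := this
    rw [det_zero_of_row_eq hne, smul_zero]
    ext c; simp [hab]

/-- odd part of the Grassmann algebra -/
noncomputable def grOdd (K : Type*) [CommRing K] [Algebra ℚ K] (d : ℕ) : OddPart (Gr K d) where
  O := (Submodule.span (Subalgebra.center ℚ (Gr K d))
    (Set.range (ExteriorAlgebra.ι K : (Fin d → K) → Gr K d))).toAddSubgroup
  anti := by
    intro x hx y hy
    have key : ∀ u v, ExteriorAlgebra.ι K u * ExteriorAlgebra.ι K v
        = -(ExteriorAlgebra.ι K v * (ExteriorAlgebra.ι K u : Gr K d)) := fun u v =>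
      eq_neg_of_add_eq_zero_left (ExteriorAlgebra.ι_add_mul_swap u v)
    have hx' : x ∈ Submodule.span (Subalgebra.center ℚ (Gr K d))
      (Set.range (ExteriorAlgebra.ι K : (Fin d → K) → Gr K d)) := hx
    have hy' : y ∈ Submodule.span (Subalgebra.center ℚ (Gr K d))
      (Set.range (ExteriorAlgebra.ι K : (Fin d → K) → Gr K d)) := hy
    clear hx hy
    induction hx' using Submodule.span_induction with
    | mem x hx =>
      obtain ⟨u, rfl⟩ := hx
      induction hy' using Submodule.span_induction with
      | mem y hy => obtain ⟨v, rfl⟩ := hy; exact key u v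
      | zero => simp
      | add a b _ _ ha hb => rw [mul_add, add_mul, ha, hb]; abel
      | smul c a _ ha =>
        have hc := Subalgebra.mem_center_iff.1 c.2
        change _ * ((c : Gr K d) * a) = -((c : Gr K d) * a * _)
        rw [← mul_assoc, hc, mul_assoc, ha, mul_assoc, mul_neg]
    | zero => simp
    | add a b _ _ ha hb => rw [mul_add, add_mul, ha, hb]; abel
    | smul c a _ ha =>
      have hc := Subalgebra.mem_center_iff.1 c.2
      change (c : Gr K d) * a * y = -(y * ((c : Gr K d) * a))
      rw [mul_assoc, ha, ← mul_assoc y, hc, mul_assoc, mul_neg]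
  mul_mem := by
    intro x hx y hy
    have key : ∀ u v, ExteriorAlgebra.ι K u * ExteriorAlgebra.ι K v
        = -(ExteriorAlgebra.ι K v * (ExteriorAlgebra.ι K u : Gr K d)) := fun u v =>
      eq_neg_of_add_eq_zero_left (ExteriorAlgebra.ι_add_mul_swap u v)
    have hx' : x ∈ Submodule.span (Subalgebra.center ℚ (Gr K d))
      (Set.range (ExteriorAlgebra.ι K : (Fin d → K) → Gr K d)) := hx
    have hy' : y ∈ Submodule.span (Subalgebra.center ℚ (Gr K d))
      (Set.range (ExteriorAlgebra.ι K : (Fin d → K) → Gr K d)) := hy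
    clear hx hy
    induction hx' using Submodule.span_induction with
    | mem x hx =>
      obtain ⟨u, rfl⟩ := hx
      induction hy' using Submodule.span_induction with
      | mem y hy =>
        obtain ⟨v, rfl⟩ := hy
        rw [Subalgebra.mem_center_iff]
        intro b
        induction b using ExteriorAlgebra.induction with
        | algebraMap r => exact Algebra.commutes _ _
        | ι w =>
          rw [← mul_assoc, key w u, neg_mul, mul_assoc, key w v, mul_neg, neg_neg, mul_assoc]
        | mul a b ha hb => rw [mul_assoc, hb, ← mul_assoc, ha, mul_assoc]
        | add a b ha hb => rw [add_mul, ha, hb, mul_add]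
      | zero => rw [mul_zero]; exact Subalgebra.zero_mem _
      | add a b _ _ ha hb => rw [mul_add]; exact Subalgebra.add_mem _ ha hb
      | smul c a _ ha =>
        have hc := Subalgebra.mem_center_iff.1 c.2
        change _ * ((c : Gr K d) * a) ∈ _
        rw [← mul_assoc, hc, mul_assoc]
        exact Subalgebra.mul_mem _ c.2 ha
    | zero => rw [zero_mul]; exact Subalgebra.zero_mem _
    | add a b _ _ ha hb => rw [add_mul]; exact Subalgebra.add_mem _ ha hb
    | smul c a _ ha =>
      change (c : Gr K d) * a * y ∈ _
      rw [mul_assoc]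
      exact Subalgebra.mul_mem _ c.2 ha
  smul_mem := by
    intro c hc x hx
    exact Submodule.smul_mem (Submodule.span (Subalgebra.center ℚ (Gr K d))
      (Set.range (ExteriorAlgebra.ι K : (Fin d → K) → Gr K d))) ⟨c, hc⟩ hx

theorem grOdd_EO {l m : Type*} [Algebra ℚ K] {d : ℕ} (x : Fin d → Matrix l m K) :
    (grOdd K d).EO (oddMat x) := fun i j =>
  Submodule.subset_span (s := (Set.range (ExteriorAlgebra.ι K : (Fin d → K) → Gr K d)))
    (R := Subalgebra.center ℚ (Gr K d)) ⟨_, rfl⟩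

theorem al_rat [Algebra ℚ K] {m : Type*} [Fintype m] [DecidableEq m]
    (x : Fin (2 * Fintype.card m) → Matrix m m K) : stdPoly _ x = 0 :=
  stdPoly_of_pow x ((grOdd K _).pow_zero (grOdd_EO x) le_rfl)

theorem link_rat [Algebra ℚ K] {l n : Type*} [Fintype l] [DecidableEq l] [Fintype n]
    [DecidableEq n] {p q : ℕ} (hp : Fintype.card l = p + 1) (hq : Fintype.card n = q)
    (a : Fin (4*p+2*q+2) → Matrix l l K) (b : Fin (4*p+2*q+2) → Matrix n n K)
    (x : Fin (4*p+2*q+2) → Matrix l n K) (y : Fin (4*p+2*q+2) → Matrix n l K)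
    (z : Fin (4*p+2*q+2) → Matrix l l K) :
    stdPoly _ (fun k => linkMat (a k) (b k) (x k) (y k) (z k)) = 0 := by
  apply stdPoly_of_pow
  have : oddMat (fun k => linkMat (a k) (b k) (x k) (y k) (z k)) =
      linkMat (oddMat a) (oddMat b) (oddMat x) (oddMat y) (oddMat z) := by
    have h0 : ExteriorAlgebra.ι K (fun _ => 0 : Fin (4*p+2*q+2) → K) = 0 :=
      map_zero (ExteriorAlgebra.ι K)
    ext i j
    rcases i with i | i | i <;> rcases j with j | j | j <;> simp [oddMat, linkMat, h0]
  rw [this]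
  exact (grOdd K _).link_pow (grOdd_EO a) (grOdd_EO b) (grOdd_EO x) (grOdd_EO y) (grOdd_EO z) hp hq

/-- lifting entries to polynomials -/
noncomputable def evK (K : Type*) [CommRing K] : MvPolynomial K ℤ →+* K :=
  MvPolynomial.eval₂Hom (Int.castRingHom K) id

theorem evK_X (c : K) : evK K (MvPolynomial.X c) = c := by simp [evK]

theorem stdPoly_transfer {m : Type*} [Fintype m] [DecidableEq m] {d : ℕ}
    (x : Fin d → Matrix m m K) (X : Fin d → Matrix m m (MvPolynomial K ℤ))
    (hX : ∀ k, (X k).map (evK K) = x k)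
    (h : stdPoly d (fun k => (X k).map (MvPolynomial.map (σ := K) (Int.castRingHom ℚ))) = 0) :
    stdPoly d x = 0 := by
  have h1 : stdPoly d X = 0 := by
    have h2 := stdPoly_map (MvPolynomial.map (σ := K) (Int.castRingHom ℚ)).mapMatrix d X
    simp only [RingHom.mapMatrix_apply] at h2
    rw [h] at h2
    have hinj : Function.Injective (MvPolynomial.map (σ := K) (Int.castRingHom ℚ)) :=
      MvPolynomial.map_injective _ Int.cast_injective
    ext1 i j
    apply hinj
    have := congrFun (congrFun h2 i) j
    simpa using this
  have h2 := stdPoly_map (evK K).mapMatrix d X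
  rw [h1, map_zero] at h2
  simp only [RingHom.mapMatrix_apply, hX] at h2
  exact h2.symm

theorem al_comm {m : Type*} [Fintype m] [DecidableEq m]
    (x : Fin (2 * Fintype.card m) → Matrix m m K) : stdPoly _ x = 0 := by
  apply stdPoly_transfer x (fun k => (x k).map MvPolynomial.X)
  · intro k; ext; simp [evK_X]
  · exact al_rat _

theorem linkMat_map {R S l n : Type*} [CommRing R] [CommRing S] (f : R →+* S)
    (a : Matrix l l R) (b : Matrix n n R) (x : Matrix l n R) (y : Matrix n l R)
    (z : Matrix l l R) : (linkMat a b x y z).map f =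
      linkMat (a.map f) (b.map f) (x.map f) (y.map f) (z.map f) := by
  ext i j
  rcases i with i | i | i <;> rcases j with j | j | j <;> simp [linkMat]

theorem link_comm {l n : Type*} [Fintype l] [DecidableEq l] [Fintype n]
    [DecidableEq n] {p q : ℕ} (hp : Fintype.card l = p + 1) (hq : Fintype.card n = q)
    (a : Fin (4*p+2*q+2) → Matrix l l K) (b : Fin (4*p+2*q+2) → Matrix n n K)
    (x : Fin (4*p+2*q+2) → Matrix l n K) (y : Fin (4*p+2*q+2) → Matrix n l K)
    (z : Fin (4*p+2*q+2) → Matrix l l K) :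
    stdPoly _ (fun k => linkMat (a k) (b k) (x k) (y k) (z k)) = 0 := by
  apply stdPoly_transfer _ (fun k => linkMat ((a k).map MvPolynomial.X)
    ((b k).map MvPolynomial.X) ((x k).map MvPolynomial.X) ((y k).map MvPolynomial.X)
    ((z k).map MvPolynomial.X))
  · intro k; rw [linkMat_map]; congr 1 <;> · ext; simp [evK_X]
  · simp only [linkMat_map]
    exact link_rat hp hq _ _ _ _ _

end grassmann

section sat

/-- `V` is annihilated by all values of the standard polynomial on `R`. -/
def Sat (R V : Type*) [Ring R] [AddCommGroup V] [Module R V] (d : ℕ) : Prop :=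
  ∀ (x : Fin d → R) (v : V), stdPoly d x • v = 0

/-- `R` acts on `V` as the full endomorphism ring -/
def Full (F R V : Type*) [Field F] [Ring R] [AddCommGroup V] [Module F V] [Module R V] : Prop :=
  ∀ f : V →ₗ[F] V, ∃ r : R, ∀ v, r • v = f v

theorem sum_perm_coset {a b : ℕ} {M : Type*} [AddCommGroup M] (S : AddSubgroup M)
    (f : Equiv.Perm (Fin a ⊕ Fin b) → M)
    (h : ∀ q, ∑ s : Equiv.Perm (Fin a), ∑ t : Equiv.Perm (Fin b),
      f (q * Equiv.Perm.sumCongrHom _ _ (s, t)) ∈ S) : ∑ σ, f σ ∈ S := by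
  classical
  let H := (Equiv.Perm.sumCongrHom (Fin a) (Fin b)).range
  have hbij : Function.Bijective
      (fun p : (Equiv.Perm (Fin a ⊕ Fin b) ⧸ H) × H => p.1.out * (p.2 : Equiv.Perm _)) := by
    constructor
    · rintro ⟨q, h⟩ ⟨q', h'⟩ hqq
      have h1 : q = q' := by
        have := congrArg (QuotientGroup.mk (s := H)) hqq
        simpa using this
      subst h1
      simpa using hqq
    · intro σ
      have h1 : (σ : Equiv.Perm (Fin a ⊕ Fin b) ⧸ H) =
        ((σ : Equiv.Perm (Fin a ⊕ Fin b) ⧸ H).out : Equiv.Perm (Fin a ⊕ Fin b)) := by simp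
      refine ⟨((σ : Equiv.Perm (Fin a ⊕ Fin b) ⧸ H), ⟨_, QuotientGroup.eq.1 h1.symm⟩), ?_⟩
      simp
  let e := Equiv.ofBijective _ hbij
  let e2 := (MonoidHom.ofInjective
    (Equiv.Perm.sumCongrHom_injective (α := Fin a) (β := Fin b))).toEquiv
  have : Fintype (Equiv.Perm (Fin a ⊕ Fin b) ⧸ H) := Fintype.ofFinite _
  have : Fintype H := Fintype.ofFinite _
  rw [← e.sum_comp, Fintype.sum_prod_type]
  refine S.sum_mem fun q _ => ?_
  rw [← e2.sum_comp, Fintype.sum_prod_type]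
  exact h q.out

theorem stdPoly_add_mem {R : Type*} [Ring R] {a b : ℕ} (S : AddSubgroup R)
    (hS : ∀ y z, stdPoly a y * stdPoly b z ∈ S) (x : Fin (a + b) → R) :
    stdPoly (a + b) x ∈ S := by
  rw [stdPoly, ← ((finSumFinEquiv (m := a) (n := b)).permCongr).sum_comp]
  apply sum_perm_coset
  intro q
  have key : ∀ (s : Equiv.Perm (Fin a)) (t : Equiv.Perm (Fin b)),
    ((Equiv.Perm.sign (finSumFinEquiv.permCongr
      (q * Equiv.Perm.sumCongrHom _ _ (s, t))) : ℤˣ) : ℤ) •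
      (List.ofFn fun i => x (finSumFinEquiv.permCongr
      (q * Equiv.Perm.sumCongrHom _ _ (s, t)) i)).prod =
    ((Equiv.Perm.sign q : ℤˣ) : ℤ) • (
      (((Equiv.Perm.sign s : ℤˣ) : ℤ) •
        (List.ofFn fun i => x (finSumFinEquiv (q (Sum.inl (s i))))).prod) *
      (((Equiv.Perm.sign t : ℤˣ) : ℤ) •
        (List.ofFn fun i => x (finSumFinEquiv (q (Sum.inr (t i))))).prod)) := by
    intro s t
    rw [Equiv.Perm.sign_permCongr, smul_mul_smul_comm, smul_smul, List.ofFn_add, List.prod_append]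
    congr 1
    · simp
    · congr 3
      · funext i
        have hi : ∀ h : a ≤ a + b, Fin.castLE h i = Fin.castAdd b i := fun _ => rfl
        simp [Equiv.permCongr_apply, hi]
      · funext i; simp [Equiv.permCongr_apply]
  simp only [key, ← Finset.smul_sum, ← Finset.mul_sum, ← Finset.sum_mul]
  refine S.zsmul_mem (hS (fun i => x (finSumFinEquiv (q (Sum.inl i))))
    (fun i => x (finSumFinEquiv (q (Sum.inr i))))) _

variable {R V : Type*} [Ring R] [AddCommGroup V] [Module R V]

theorem Sat.ext {a b : ℕ} (N : Submodule R V) (h1 : Sat R N a) (h2 : Sat R (V ⧸ N) b) :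
    Sat R V (a + b) := by
  intro x v
  let S : AddSubgroup R := 
    { carrier := {r | r • v = 0}
      zero_mem' := zero_smul _ _
      add_mem' := by intro p q hp hq; simp_all [add_smul]
      neg_mem' := by intro p hp; simp_all [neg_smul] }
  refine stdPoly_add_mem S ?_ x
  intro y z
  change (_ * _) • v = 0
  rw [mul_smul]
  have h3 : stdPoly b z • v ∈ N := by
    have := h2 z (N.mkQ v)
    rw [← map_smul] at this
    exact (Submodule.Quotient.mk_eq_zero N).1 this
  have h4 := h1 y ⟨_, h3⟩
  exact congrArg Subtype.val h4

theorem Sat.of_equiv {V' : Type*} [AddCommGroup V'] [Module R V'] {d : ℕ} (e : V ≃ₗ[R] V')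
    (h : Sat R V d) : Sat R V' d := by
  intro x v
  have := congrArg e (h x (e.symm v))
  simpa using this

theorem Sat.mono {a b : ℕ} (h : Sat R V a) (hab : a ≤ b) : Sat R V b := by
  obtain ⟨c, rfl⟩ := Nat.exists_eq_add_of_le hab
  refine Sat.ext (⊤ : Submodule R V) (h.of_equiv Submodule.topEquiv.symm) ?_
  intro x v
  exact Subsingleton.elim _ _

theorem sat_of_matrix {K m : Type*} [CommRing K] [Module K V] [SMulCommClass R K V] [Fintype m]
    [DecidableEq m] (b : Module.Basis m K V) {d : ℕ}
    (h : ∀ x : Fin d → R, stdPoly d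
      (fun k => LinearMap.toMatrixAlgEquiv b (Module.toModuleEnd K V (x k))) = 0) :
    Sat R V d := by
  intro x v
  let φ : R →+* Matrix m m K := 
    ((LinearMap.toMatrixAlgEquiv b).toRingEquiv.toRingHom).comp (Module.toModuleEnd K V)
  have h1 : φ (stdPoly d x) = 0 := by
    rw [stdPoly_map]; exact h x
  have h2 : Module.toModuleEnd K V (stdPoly d x) = 0 := by
    apply (LinearMap.toMatrixAlgEquiv b).injective
    rw [map_zero]; exact h1
  exact LinearMap.congr_fun h2 v

theorem sat_al (K : Type*) [Field K] [Module K V] [SMulCommClass R K V]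
    [FiniteDimensional K V] : Sat R V (2 * Module.finrank K V) := by
  apply sat_of_matrix (Module.finBasis K V)
  intro x
  have := @al_comm K _ (Fin (Module.finrank K V)) _ _
  rw [Fintype.card_fin] at this
  exact this _

end sat

section simple

variable {F R V : Type*} [Field F] [Ring R] [Algebra F R] [AddCommGroup V] [Module F V]
  [Module R V] [IsScalarTower F R V] [FiniteDimensional F V]

theorem full_of_scalar [IsSimpleModule R V]
    (h : ∀ u : Module.End R V, ∃ c : F, ∀ v, u v = c • v) : Full F R V := by
  classical
  intro f
  let f' : Module.End (Module.End R V) V :=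
    { toFun := f
      map_add' := f.map_add
      map_smul' := by
        intro u v
        obtain ⟨c, hc⟩ := h u
        simp [hc] }
  obtain ⟨r, hr⟩ := jacobson_density f' (Finset.univ.image (Module.finBasis F V))
  refine ⟨r, fun v => ?_⟩
  have : Module.toModuleEnd F V r = f := by
    apply (Module.finBasis F V).ext
    intro i
    exact (hr _ (Finset.mem_image_of_mem _ (Finset.mem_univ i))).symm
  exact LinearMap.congr_fun this v

theorem sat_of_nonscalar [IsSimpleModule R V] (u : Module.End R V)
    (hu : ¬ ∃ c : F, ∀ v, u v = c • v) : Sat R V (2 * Module.finrank F V - 2) := by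
  classical
  have hfd : FiniteDimensional F (Module.End R V) := by
    let g : Module.End R V →ₗ[F] Module.End F V :=
      { toFun := fun f => f.restrictScalars F
        map_add' := fun _ _ => rfl
        map_smul' := fun _ _ => rfl }
    refine FiniteDimensional.of_injective g ?_
    intro a b hab
    ext v
    exact LinearMap.congr_fun hab v
  have hint : IsIntegral F u := IsIntegral.of_finite F u
  have hdom : IsDomain (Module.End R V) :=
    @DivisionRing.isDomain _ (Module.End.instDivisionRing)
  have hirr : Fact (Irreducible (minpoly F u)) := ⟨minpoly.irreducible hint⟩
  let K := AdjoinRoot (minpoly F u)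
  let φ : K →+* Module.End R V := Ideal.Quotient.lift _ (Polynomial.aeval u).toRingHom (by
    intro a ha
    obtain ⟨c, rfl⟩ := Ideal.mem_span_singleton'.1 ha
    simp)
  letI : Module K V := Module.compHom V φ
  have hsm : ∀ (k : K) (v : V), k • v = φ k v := fun _ _ => rfl
  have hφF : ∀ c : F, φ (algebraMap F K c) = algebraMap F _ c := by
    intro c
    change (Polynomial.aeval u) (Polynomial.C c) = _
    simp
  have htow : IsScalarTower F K V := ⟨fun c k v => by
    rw [hsm, hsm, Algebra.smul_def, map_mul, hφF]
    rfl⟩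
  have hcomm : SMulCommClass R K V := ⟨fun r k v => by
    rw [hsm, hsm, map_smul]⟩
  have hfK : FiniteDimensional K V := Module.Finite.right F K V
  have hFK : FiniteDimensional F K := (AdjoinRoot.powerBasis (minpoly.ne_zero hint)).finite
  have hmul := Module.finrank_mul_finrank F K V
  have hnt : Nontrivial V := IsSimpleModule.nontrivial R V
  have hpos : 0 < Module.finrank K V := Module.finrank_pos
  have hposK : 0 < Module.finrank F K := Module.finrank_pos
  have hne : Module.finrank F K ≠ 1 := by
    intro h1
    have h2 := Subalgebra.bot_eq_top_of_finrank_eq_one h1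
    have h3 : AdjoinRoot.root (minpoly F u) ∈ (⊥ : Subalgebra F K) := by rw [h2]; trivial
    obtain ⟨c, hc⟩ := Algebra.mem_bot.1 h3
    apply hu
    refine ⟨c, fun v => ?_⟩
    have h4 := congrArg φ hc
    rw [hφF] at h4
    have h5 : φ (AdjoinRoot.root (minpoly F u)) = u := by
      change (Polynomial.aeval u) Polynomial.X = _
      simp
    rw [h5] at h4
    rw [← h4]; rfl
  refine (sat_al (R := R) (V := V) K).mono ?_
  rw [← hmul]
  have h2 : 2 ≤ Module.finrank F K := by omega
  have := Nat.mul_le_mul_right (Module.finrank K V) h2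
  omega

theorem sat_simple [IsSimpleModule R V] (h : ¬ Full F R V) :
    Sat R V (2 * Module.finrank F V - 2) := by
  by_cases hs : ∀ u : Module.End R V, ∃ c : F, ∀ v, u v = c • v
  · exact absurd (full_of_scalar hs) h
  · push Not at hs
    obtain ⟨u, hu⟩ := hs
    exact sat_of_nonscalar u (by push Not; exact hu)

end simple

section fd

variable (F : Type*) {R V : Type*} [Field F] [Ring R] [Algebra F R] [AddCommGroup V] [Module F V]
  [Module R V] [IsScalarTower F R V] [FiniteDimensional F V]

theorem fd_sub (N : Submodule R V) : FiniteDimensional F N :=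
  FiniteDimensional.of_injective (N.subtype.restrictScalars F) N.subtype_injective

theorem fd_quot (N : Submodule R V) : FiniteDimensional F (V ⧸ N) :=
  Module.Finite.of_surjective (N.mkQ.restrictScalars F) N.mkQ_surjective

theorem finrank_add (N : Submodule R V) :
    Module.finrank F N + Module.finrank F (V ⧸ N) = Module.finrank F V := by
  rw [← Submodule.finrank_quotient_add_finrank (N.restrictScalars F), add_comm,
    ((Submodule.Quotient.restrictScalarsEquiv F N)).finrank_eq]
  rfl

theorem sat_V : Sat R V (2 * Module.finrank F V) := sat_al F

theorem sat_of_sub (N : Submodule R V) (hN : N ≠ ⊥) (h : Sat R N (2 * Module.finrank F N - 2)) :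
    Sat R V (2 * Module.finrank F V - 2) := by
  have := fd_sub F N
  have := fd_quot F N
  have h1 := finrank_add F N
  have h2 := Sat.ext N h (sat_V F)
  have : Nontrivial N := (Submodule.nontrivial_iff_ne_bot).2 hN
  have h3 : 0 < Module.finrank F N := Module.finrank_pos
  exact h2.mono (by omega)

theorem sat_of_quot (N : Submodule R V) (hN : N ≠ ⊤)
    (h : Sat R (V ⧸ N) (2 * Module.finrank F (V ⧸ N) - 2)) :
    Sat R V (2 * Module.finrank F V - 2) := by
  have := fd_sub F N
  have := fd_quot F N
  have h1 := finrank_add F N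
  have h2 := Sat.ext N (sat_V F) h
  have : Nontrivial (V ⧸ N) := Submodule.Quotient.nontrivial_iff.2 hN
  have h3 : 0 < Module.finrank F (V ⧸ N) := Module.finrank_pos
  exact h2.mono (by omega)

end fd

section link

variable {F R V : Type*} [Field F] [Ring R] [Algebra F R] [AddCommGroup V] [Module F V]
  [Module R V] [IsScalarTower F R V] [FiniteDimensional F V]

theorem exists_basis_sub {m n : Type*} (N : Submodule R V) (bN : Module.Basis m F N)
    (bQ : Module.Basis n F (V ⧸ N)) :
    ∃ b : Module.Basis (m ⊕ n) F V, (∀ i, b (Sum.inl i) = bN i) ∧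
      (∀ j, N.mkQ (b (Sum.inr j)) = bQ j) ∧
      (∀ (w : N) i, b.repr w (Sum.inl i) = bN.repr w i) ∧
      ∀ v j, b.repr v (Sum.inr j) = bQ.repr (N.mkQ v) j := by
  let bN' : Module.Basis m F (N.restrictScalars F) := bN
  let bQ' := bQ.map (Submodule.Quotient.restrictScalarsEquiv F N).symm
  refine ⟨bN'.sumQuot bQ', fun i => ?_, fun j => ?_, fun w i => ?_, fun v j => ?_⟩
  · rw [Module.Basis.sumQuot_inl]; rfl
  · have := Module.Basis.sumQuot_inr bN' bQ' j
    refine (congrArg (Submodule.Quotient.restrictScalarsEquiv F N) this).trans ?_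
    simp [bQ']
  · exact Module.Basis.sumQuot_repr_inl_of_mem bN' bQ' w w.2 i
  · rw [Module.Basis.sumQuot_repr_inr]
    rfl

theorem sat_link (N1 N : Submodule R V) (hle : N1 ≤ N) (e : (V ⧸ N) ≃ₗ[R] N1) (hN1 : N1 ≠ ⊥) :
    Sat R V (2 * Module.finrank F V - 2) := by
  have := fd_sub F N1
  have := fd_sub F N
  have := fd_quot F N
  let N1' : Submodule R N := N1.submoduleOf N
  have := fd_sub F N1'
  have := fd_quot F N1'
  have h1 := finrank_add F N
  have h2 := finrank_add F N1'
  let ee := Submodule.submoduleOfEquivOfLe hle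
  have h3 : Module.finrank F N1' = Module.finrank F N1 := (ee.restrictScalars F).finrank_eq
  have h4 : Module.finrank F (V ⧸ N) = Module.finrank F N1 := (e.restrictScalars F).finrank_eq
  have : Nontrivial N1 := (Submodule.nontrivial_iff_ne_bot).2 hN1
  have h5 : 0 < Module.finrank F N1 := Module.finrank_pos
  obtain ⟨p, hp⟩ := Nat.exists_eq_add_of_lt h5
  set q := Module.finrank F (N ⧸ N1') with hq
  let c := Module.finBasis F N1
  obtain ⟨bN, hN1, hN2, hN3, hN4⟩ := exists_basis_sub N1' (c.map (ee.restrictScalars F).symm)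
    (Module.finBasis F (N ⧸ N1'))
  obtain ⟨b0, hb1, hb2, hb3, hb4⟩ := exists_basis_sub N bN (c.map (e.restrictScalars F).symm)
  let b := b0.reindex (Equiv.sumAssoc _ _ _)
  have hd : 2 * Module.finrank F V - 2 = 4 * p + 2 * q + 2 := by omega
  rw [hd]
  refine sat_of_matrix b fun x => ?_
  have hc : Fintype.card (Fin (Module.finrank F N1)) = p + 1 := by simp; omega
  have hcq : Fintype.card (Fin (Module.finrank F (N ⧸ N1'))) = q := by simp; omega
  set M := fun k => LinearMap.toMatrixAlgEquiv b (Module.toModuleEnd F V (x k)) with hM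
  have hMk : M = fun k => linkMat (M k).toBlocks₁₁ (M k).toBlocks₂₂.toBlocks₁₁
      (M k).toBlocks₁₂.toCols₁ (M k).toBlocks₂₂.toBlocks₁₂ (M k).toBlocks₁₂.toCols₂ := by
    funext k
    have hMij : ∀ i j, M k i j = b.repr (x k • b j) i := by
      intro i j
      simp only [hM, LinearMap.toMatrixAlgEquiv_apply]
      rfl
    have hin1 : ∀ i, b (Sum.inl i) = c i := by
      intro i
      simp [b, hb1, hN1]
      rfl
    have hin2 : ∀ i, b (Sum.inr (Sum.inl i)) ∈ N := by
      intro i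
      simp [b, hb1]
    have hin3 : ∀ i, e (N.mkQ (b (Sum.inr (Sum.inr i)))) = c i := by
      intro i
      have := congrArg e (hb2 i)
      simpa [b] using this
    have hr3 : ∀ v i, b.repr v (Sum.inr (Sum.inr i)) = c.repr (e (N.mkQ v)) i := by
      intro v i
      simpa [b] using hb4 v i
    have hr1 : ∀ (v : N1) i, b.repr v (Sum.inl i) = c.repr v i := by
      intro v i
      have e1 := hb3 ⟨v, hle v.2⟩ (Sum.inl i)
      have e2 := hN3 ⟨⟨v, hle v.2⟩, v.2⟩ i
      have e3 : b.repr v (Sum.inl i) = b0.repr v (Sum.inl (Sum.inl i)) := by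
        simp [b]
      rw [e3]
      refine (e1.trans e2).trans ?_
      rfl
    have hr2 : ∀ (v : N1) i, b.repr v (Sum.inr (Sum.inl i)) = 0 := by
      intro v i
      have e1 := hb3 ⟨v, hle v.2⟩ (Sum.inr i)
      have e2 := hN4 ⟨v, hle v.2⟩ i
      have e3 : b.repr v (Sum.inr (Sum.inl i)) = b0.repr v (Sum.inl (Sum.inr i)) := by
        simp [b]
      rw [e3]
      refine (e1.trans e2).trans ?_
      have : N1'.mkQ ⟨v, hle v.2⟩ = 0 := (Submodule.Quotient.mk_eq_zero N1').2 v.2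
      rw [this]; simp
    have hr4 : ∀ v ∈ N, ∀ i, b.repr v (Sum.inr (Sum.inr i)) = 0 := by
      intro v hv i
      rw [hr3]
      have : N.mkQ v = 0 := (Submodule.Quotient.mk_eq_zero N).2 hv
      rw [this]; simp
    ext i j
    rcases i with i | i | i <;> rcases j with j | j | j <;>
      simp only [linkMat, fromBlocks_apply₁₁, fromBlocks_apply₁₂, fromBlocks_apply₂₁,
        fromBlocks_apply₂₂, fromCols_apply_inl, fromCols_apply_inr, toBlocks₁₁, toBlocks₁₂,
        toBlocks₂₂, toCols₁_apply, toCols₂_apply, of_apply, Matrix.zero_apply]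
    · rw [hMij, hin1]
      exact hr2 (x k • c j) i
    · rw [hMij, hin1]
      exact hr4 _ (hle (x k • c j).2) i
    · rw [hMij]
      exact hr4 _ (N.smul_mem _ (hin2 j)) i
    · rw [hMij, hMij, hr3, map_smul, map_smul, hin3, hin1]
      exact (hr1 (x k • c j) i).symm
  rw [hMk]
  exact link_comm hc hcq _ _ _ _ _

end link

section ann

variable {F R V : Type*} [Field F] [Ring R] [Algebra F R] [AddCommGroup V] [Module F V]
  [Module R V] [IsScalarTower F R V] [FiniteDimensional F V]

theorem equiv_of_ann {W U : Type*} [AddCommGroup W] [Module F W] [Module R W]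
    [FiniteDimensional F W] [IsScalarTower F R W] [AddCommGroup U] [Module R U]
    [IsSimpleModule R W] [IsSimpleModule R U]
    (hfull : Full F R W) (hann : ∀ a : R, (∀ w : W, a • w = 0) → ∀ u : U, a • u = 0) :
    Nonempty (W ≃ₗ[R] U) := by
  have := IsSimpleModule.nontrivial R U
  obtain ⟨v, hv⟩ := exists_ne (0 : U)
  let b := Module.finBasis F W
  choose h hh using fun i => hfull ((b.coord i).smulRight (b i))
  have hs : ∀ u : U, (∑ i, h i - 1) • u = 0 := by
    apply hann
    intro w
    rw [sub_smul, Finset.sum_smul, one_smul, sub_eq_zero]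
    simp only [hh]
    simp [b.sum_repr]
  have hex : ∃ i, h i • v ≠ 0 := by
    by_contra hcon
    push Not at hcon
    have := hs v
    rw [sub_smul, Finset.sum_smul, one_smul, Finset.sum_eq_zero (fun i _ => hcon i)] at this
    apply hv
    simpa using this
  obtain ⟨i, hi⟩ := hex
  have hb : b i ≠ 0 := b.ne_zero i
  let α := LinearMap.toSpanSingleton R W (b i)
  let β := LinearMap.toSpanSingleton R U (h i • v)
  have hα : Function.Surjective α := IsSimpleModule.toSpanSingleton_surjective R hb
  have hker : LinearMap.ker α ≤ LinearMap.ker β := by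
    intro r hr
    have hr' : r • b i = 0 := hr
    change r • h i • v = 0
    rw [← mul_smul]
    apply hann
    intro w
    rw [mul_smul, hh]
    simp only [LinearMap.smulRight_apply]
    rw [smul_comm, hr', smul_zero]
  let ψ : W →ₗ[R] U := (Submodule.liftQ _ β hker).comp
    (α.quotKerEquivOfSurjective hα).symm.toLinearMap
  have hψ : ψ (b i) = h i • v := by
    have h1 : α 1 = b i := one_smul _ _
    have h2 : (α.quotKerEquivOfSurjective hα).symm (b i) = Submodule.Quotient.mk 1 := by
      rw [LinearEquiv.symm_apply_eq, ← h1]; rfl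
    simp only [ψ, LinearMap.comp_apply, LinearEquiv.coe_coe, h2]
    exact one_smul R (h i • v)
  have hne : ψ ≠ 0 := by
    intro h0
    rw [h0] at hψ
    exact hi hψ.symm
  exact ⟨LinearEquiv.ofBijective ψ (LinearMap.bijective_of_ne_zero hne)⟩

theorem sat_ann (N1 N : Submodule R V) (hle : N1 ≤ N) [IsSimpleModule R N1]
    [IsSimpleModule R (V ⧸ N)]
    (hann : ∀ a : R, (∀ v : V, a • v ∈ N) → ∀ w ∈ N1, a • w = 0) :
    Sat R V (2 * Module.finrank F V - 2) := by
  have := fd_quot F N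
  have hnt := IsSimpleModule.nontrivial R (V ⧸ N)
  by_cases hfull : Full F R (V ⧸ N)
  · have hE : Nonempty ((V ⧸ N) ≃ₗ[R] N1) := by
      refine equiv_of_ann hfull ?_
      intro a ha u
      apply Subtype.ext
      refine hann a (fun v => ?_) u u.2
      exact (Submodule.Quotient.mk_eq_zero N).1 (ha (N.mkQ v))
    obtain ⟨e⟩ := hE
    have := IsSimpleModule.nontrivial R N1
    exact sat_link N1 N hle e ((Submodule.nontrivial_iff_ne_bot).1 this)
  · exact sat_of_quot F N (Submodule.Quotient.nontrivial_iff.1 hnt) (sat_simple hfull)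

theorem sat_L6 (N1 : Submodule R V) [hs : IsSimpleModule R N1]
    (H : ∀ r : R, (∀ v : V, r • v ∈ N1) → ∀ w ∈ N1, r • w = 0) :
    Sat R V (2 * Module.finrank F V - 2) := by
  have hart : IsArtinian R V := isArtinian_of_tower F inferInstance
  have hnoe : IsNoetherian R V := isNoetherian_of_tower F inferInstance
  let P : Set (Submodule R V) := {N | N1 ≤ N ∧
    ∀ r : R, (∀ v ∈ N, r • v ∈ N1) → ∀ w ∈ N1, r • w = 0}
  obtain ⟨N', ⟨hN1', hN'⟩, hmin⟩ := (wellFounded_lt (α := Submodule R V)).has_min P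
    ⟨⊤, le_top, fun r hr => H r (fun v => hr v trivial)⟩
  have hnt := IsSimpleModule.nontrivial R N1
  have hne : N1 ≠ ⊥ := (Submodule.nontrivial_iff_ne_bot).1 hnt
  have hlt : N1 < N' := by
    refine lt_of_le_of_ne hN1' ?_
    rintro rfl
    apply hne
    rw [eq_bot_iff]
    intro w hw
    have := hN' 1 (fun v hv => by simpa using hv) w hw
    simpa using this
  obtain ⟨N, ⟨hNN1, hNlt⟩, hmax⟩ := (wellFounded_gt (α := Submodule R V)).has_min
    {N | N1 ≤ N ∧ N < N'} ⟨N1, le_rfl, hlt⟩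
  have hcov : N ⋖ N' := ⟨hNlt, fun M h1 h2 => hmax M ⟨hNN1.trans h1.le, h2⟩ h1⟩
  have hnP : N ∉ P := fun h => hmin N h hNlt
  have hr0 : ∃ r : R, (∀ v ∈ N, r • v ∈ N1) ∧ ∃ w ∈ N1, r • w ≠ 0 := by
    by_contra hcon
    push Not at hcon
    exact hnP ⟨hNN1, hcon⟩
  obtain ⟨r0, hr0, w0, hw0, hrw0⟩ := hr0
  have hsimp : IsSimpleModule R (N' ⧸ N.submoduleOf N') :=
    (covBy_iff_quot_is_simple hNlt.le).1 hcov
  have hsimp1 : IsSimpleModule R (N1.submoduleOf N') :=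
    IsSimpleModule.congr (Submodule.submoduleOfEquivOfLe hN1')
  have := fd_sub F N'
  refine sat_of_sub F N' (fun h => hne (eq_bot_iff.2 (h ▸ hN1'))) ?_
  refine sat_ann (N1.submoduleOf N') (N.submoduleOf N') (fun x hx => hNN1 hx) ?_
  intro a ha w hw
  by_contra hcon
  have hcon' : a • (⟨w, hw⟩ : N1) ≠ 0 := fun h => hcon (Subtype.ext (congrArg (fun z : N1 => (z : V)) h))
  obtain ⟨s, hs'⟩ := IsSimpleModule.toSpanSingleton_surjective R hcon' ⟨w0, hw0⟩
  apply hrw0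
  have h1 : s • a • (w : V) = w0 := congrArg Subtype.val hs'
  rw [← h1, ← mul_smul, ← mul_smul]
  refine hN' _ ?_ _ hw
  intro v hv
  rw [mul_smul, mul_smul]
  exact hr0 _ (N.smul_mem _ (ha ⟨v, hv⟩))

end ann

section key

variable {F R V : Type*} [Field F] [Ring R] [Algebra F R] [AddCommGroup V] [Module F V]
  [Module R V] [IsScalarTower F R V] [FiniteDimensional F V]

theorem sat_disjoint (N K : Submodule R V) (hN : N ≠ ⊥) (hK : K ≠ ⊥) (hd : N ⊓ K = ⊥) :
    Sat R V (2 * Module.finrank F V - 2) := by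
  have key : ∀ M : Submodule R V, M ≠ ⊥ → Sat R (V ⧸ M) (2 * Module.finrank F V - 2) := by
    intro M hM
    have := fd_sub F M
    have := fd_quot F M
    have h1 := finrank_add F M
    have : Nontrivial M := (Submodule.nontrivial_iff_ne_bot).2 hM
    have h3 : 0 < Module.finrank F M := Module.finrank_pos
    exact (sat_V F).mono (by omega)
  intro x v
  have h1 : stdPoly _ x • v ∈ N ⊓ K :=
    ⟨(Submodule.Quotient.mk_eq_zero N).1 (key N hN x (N.mkQ v)),
     (Submodule.Quotient.mk_eq_zero K).1 (key K hK x (K.mkQ v))⟩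
  rw [hd] at h1
  simpa using h1

theorem key_hom (hV : ¬ Sat R V (2 * Module.finrank F V - 2)) (N1 : Submodule R V)
    [hs : IsSimpleModule R N1] (f : V →ₗ[F] V) (hf : ∀ v, f v ∈ N1) :
    ∃ r : R, ∀ v, r • v = f v := by
  have hnt := IsSimpleModule.nontrivial R N1
  have hne : N1 ≠ ⊥ := (Submodule.nontrivial_iff_ne_bot).1 hnt
  have := fd_sub F N1
  have hfull : Full F R N1 := by
    by_contra h
    exact hV (sat_of_sub F N1 hne (sat_simple h))
  have hr0 : ∃ r : R, (∀ v : V, r • v ∈ N1) ∧ ∃ w ∈ N1, r • w ≠ 0 := by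
    by_contra hcon
    push Not at hcon
    exact hV (sat_L6 N1 hcon)
  obtain ⟨r0, hr0, w0, hw0, hrw0⟩ := hr0
  -- the common kernel is zero
  have hK : ∀ x : V, x ≠ 0 → ∃ r : R, (∀ v : V, r • v ∈ N1) ∧ r • x ≠ 0 := by
    intro x hx
    by_contra hcon
    push Not at hcon
    let K : Submodule R V :=
      { carrier := {x | ∀ r : R, (∀ v : V, r • v ∈ N1) → r • x = 0}
        zero_mem' := fun r _ => smul_zero r
        add_mem' := fun {a b} ha hb r hr => by rw [smul_add, ha r hr, hb r hr, add_zero]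
        smul_mem' := fun s a ha r hr => by
          rw [← mul_smul]
          refine ha _ fun v => ?_
          rw [mul_smul]
          exact hr _ }
    refine hV (sat_disjoint N1 K hne ?_ ?_)
    · intro h
      have : x ∈ K := hcon
      rw [h] at this
      exact hx (by simpa using this)
    · rw [eq_bot_iff]
      intro y hy
      by_contra hy0
      have hy0' : (⟨y, hy.1⟩ : N1) ≠ 0 := fun h =>
        hy0 (by simpa using congrArg (fun z : N1 => (z : V)) h)
      obtain ⟨s, hs'⟩ := IsSimpleModule.toSpanSingleton_surjective R hy0' ⟨w0, hw0⟩
      have h1 : s • y = w0 := congrArg Subtype.val hs'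
      have : w0 ∈ K := h1 ▸ K.smul_mem s hy.2
      exact hrw0 (this r0 hr0)
  let Φ : Submodule F (Module.Dual F V) :=
    { carrier := {φ | ∀ u ∈ N1, ∃ r : R, ∀ x, r • x = φ x • u}
      zero_mem' := fun u _ => ⟨0, by simp⟩
      add_mem' := fun {a b} ha hb u hu => by
        obtain ⟨r, hr⟩ := ha u hu
        obtain ⟨s, hs⟩ := hb u hu
        exact ⟨r + s, fun x => by rw [add_smul, hr, hs, LinearMap.add_apply, add_smul]⟩
      smul_mem' := fun c a ha u hu => by
        obtain ⟨r, hr⟩ := ha u hu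
        exact ⟨c • r, fun x => by rw [smul_assoc, hr, LinearMap.smul_apply, smul_assoc]⟩ }
  have hΦ : Φ = ⊤ := by
    have h1 : Φ.dualCoannihilator = ⊥ := by
      rw [eq_bot_iff]
      intro x hx
      by_contra hx0
      obtain ⟨r, hr, hrx⟩ := hK x hx0
      have hrx' : (⟨r • x, hr x⟩ : N1) ≠ 0 := fun h =>
        hrx (congrArg (fun z : N1 => (z : V)) h)
      obtain ⟨lam, hlam⟩ := Module.Projective.exists_dual_ne_zero F hrx'
      let ρ : V →ₗ[F] N1 :=
        { toFun := fun y => ⟨r • y, hr y⟩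
          map_add' := fun y z => Subtype.ext (smul_add r y z)
          map_smul' := fun c y => Subtype.ext (smul_comm r c y) }
      have hmem : lam.comp ρ ∈ Φ := by
        intro u hu
        obtain ⟨a, ha⟩ := hfull (lam.smulRight ⟨u, hu⟩)
        refine ⟨a * r, fun y => ?_⟩
        have h2 := congrArg (fun z : N1 => (z : V)) (ha (ρ y))
        rw [mul_smul]
        exact h2
      exact hlam ((Submodule.mem_dualCoannihilator x).1 hx _ hmem)
    have h2 := Subspace.dualCoannihilator_dualAnnihilator_eq (W := Φ)
    rw [h1] at h2
    rw [← h2]; simp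
  let b := Module.finBasis F N1
  have hr : ∀ i, ∃ r : R, ∀ x, r • x = (b.coord i) ⟨f x, hf x⟩ • (b i : V) := by
    intro i
    have : (b.coord i).comp (f.codRestrict (N1.restrictScalars F) hf) ∈ Φ := by
      rw [hΦ]; trivial
    exact this (b i) (b i).2
  choose r hr using hr
  refine ⟨∑ i, r i, fun v => ?_⟩
  rw [Finset.sum_smul]
  simp only [hr]
  have h3 := congrArg (N1.subtype.restrictScalars F) (b.sum_repr ⟨f v, hf v⟩)
  rw [map_sum] at h3
  exact h3

end key

section blocks

theorem cum_zero {t : ℕ} (ℓ : Fin t → ℕ) : cum ℓ 0 = 0 := by simp [cum]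

theorem cum_cons {t : ℕ} (p : ℕ) (ℓ : Fin t → ℕ) (k : ℕ) :
    cum (Fin.cons p ℓ : Fin (t + 1) → ℕ) (k + 1) = p + cum ℓ k := by
  simp [cum, Fin.sum_univ_succ]

theorem blockUT_cons {F : Type*} [Field F] {t p m : ℕ} (ℓ : Fin t → ℕ)
    (M : Matrix (Fin (p + m)) (Fin (p + m)) F) :
    BlockUT (Fin.cons p ℓ : Fin (t + 1) → ℕ) M ↔
      (∀ i j, M (Fin.natAdd p i) (Fin.castAdd m j) = 0) ∧
      BlockUT ℓ (M.submatrix (Fin.natAdd p) (Fin.natAdd p)) := by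
  constructor
  · intro h
    refine ⟨fun i j => h _ _ ⟨0 + 1, ?_⟩, fun i j => ?_⟩
    · rw [cum_cons, cum_zero]
      simp
    · rintro ⟨k, hk1, hk2⟩
      refine h _ _ ⟨k + 1, ?_⟩
      rw [cum_cons]
      simp [hk1, hk2]
  · rintro ⟨h1, h2⟩ i j ⟨k, hk1, hk2⟩
    rcases k with _ | k
    · rw [cum_zero] at hk1; omega
    · rw [cum_cons] at hk1 hk2
      induction i using Fin.addCases with
      | left i => simp at hk2; omega
      | right i =>
        induction j using Fin.addCases with
        | left j => exact h1 i j
        | right j =>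
          refine h2 i j ⟨k, ?_, ?_⟩
          · simpa using hk1
          · simpa using hk2

theorem blockUT_single {F : Type*} [Field F] {n : ℕ} (M : Matrix (Fin n) (Fin n) F) :
    BlockUT (fun _ : Fin 1 => n) M := by
  rintro i j ⟨k, hk1, hk2⟩
  exfalso
  simp only [cum, Finset.univ_unique, Finset.sum_singleton] at hk1 hk2
  split_ifs at hk1 hk2 <;> omega

end blocks

section main

universe v

theorem main_ind {F R : Type*} [Field F] [Ring R] [Algebra F R] (n : ℕ) :
    ∀ (V : Type v) [AddCommGroup V] [Module F V] [Module R V] [IsScalarTower F R V]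
      [FiniteDimensional F V], Module.finrank F V = n → 0 < n → ¬ Sat R V (2 * n - 2) →
    ∃ (t : ℕ) (_ : 0 < t) (ℓ : Fin t → ℕ), (∀ i, 0 < ℓ i) ∧ (∑ i, ℓ i) = n ∧
      ∃ b : Module.Basis (Fin n) F V, ∀ f : V →ₗ[F] V,
        (∃ r : R, ∀ v, r • v = f v) ↔ BlockUT ℓ (LinearMap.toMatrix b b f) := by
  induction n using Nat.strong_induction_on with
  | _ n IH =>
  intro V _ _ _ _ _ hn hpos hsat
  have hart : IsArtinian R V := isArtinian_of_tower F inferInstance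
  have hsat' : ¬ Sat R V (2 * Module.finrank F V - 2) := by rw [hn]; exact hsat
  have hnt : Nontrivial V := Module.finrank_pos_iff.1 (hn ▸ hpos : 0 < Module.finrank F V)
  obtain ⟨N1, hN1⟩ := IsAtomic.exists_atom (Submodule R V)
  have hs : IsSimpleModule R N1 := isSimpleModule_iff_isAtom.2 hN1
  have hkey := key_hom hsat' N1
  by_cases htop : N1 = ⊤
  · refine ⟨1, one_pos, fun _ => n, fun _ => hpos, by simp, Module.finBasisOfFinrankEq F V hn, ?_⟩
    intro f
    exact iff_of_true (hkey f (fun v => htop ▸ trivial)) (blockUT_single _)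
  have := fd_sub F N1
  have := fd_quot F N1
  have hadd := finrank_add F N1
  have : Nontrivial N1 := (Submodule.nontrivial_iff_ne_bot).2 hN1.1
  have h3 : 0 < Module.finrank F N1 := Module.finrank_pos
  have : Nontrivial (V ⧸ N1) := Submodule.Quotient.nontrivial_iff.2 htop
  have h4 : 0 < Module.finrank F (V ⧸ N1) := Module.finrank_pos
  obtain ⟨p, hp⟩ : ∃ p, p = Module.finrank F N1 := ⟨_, rfl⟩
  obtain ⟨m, hm⟩ : ∃ m, m = Module.finrank F (V ⧸ N1) := ⟨_, rfl⟩
  obtain rfl : n = p + m := by omega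
  obtain ⟨t, ht, ℓ, hℓ, hsum, b', hb'⟩ := IH m (by omega) (V ⧸ N1) hm.symm (by omega)
    (fun h => hsat' (sat_of_quot F N1 htop (hm ▸ h)))
  let b1 := Module.finBasisOfFinrankEq F N1 hp.symm
  obtain ⟨b0, hb1, hb2, hb3, hb4⟩ := exists_basis_sub N1 b1 b'
  let b := b0.reindex finSumFinEquiv
  refine ⟨t + 1, t.succ_pos, Fin.cons p ℓ, ?_, ?_, b, ?_⟩
  · intro i
    induction i using Fin.cases with
    | zero => simpa using (by omega : 0 < p)
    | succ i => simpa using hℓ i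
  · simp [Fin.sum_univ_succ, hsum]
  intro f
  rw [blockUT_cons]
  set M := LinearMap.toMatrix b b f with hM
  have hMn : ∀ i j, M (Fin.natAdd p i) j = b'.repr (N1.mkQ (f (b j))) i := by
    intro i j
    rw [hM, LinearMap.toMatrix_apply, ← hb4]
    simp [b]
  have hbl : ∀ j, b (Fin.castAdd m j) = b1 j := by
    intro j; rw [← hb1]; simp [b]
  have hbr : ∀ j, N1.mkQ (b (Fin.natAdd p j)) = b' j := by
    intro j; rw [← hb2]; simp [b]
  let g : (V ⧸ N1) →ₗ[F] (V ⧸ N1) :=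
    LinearMap.toMatrix b' b' |>.symm (M.submatrix (Fin.natAdd p) (Fin.natAdd p))
  have hgM : LinearMap.toMatrix b' b' g = M.submatrix (Fin.natAdd p) (Fin.natAdd p) := by
    simp [g]
  have hg : (∀ i j, M (Fin.natAdd p i) (Fin.castAdd m j) = 0) → ∀ v, N1.mkQ (f v) = g (N1.mkQ v) := by
    intro h0
    have : (N1.mkQ.restrictScalars F).comp f = g.comp (N1.mkQ.restrictScalars F) := by
      apply b.ext
      intro j
      change N1.mkQ (f (b j)) = g (N1.mkQ (b j))
      apply b'.repr.injective
      ext i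
      rw [← hMn]
      induction j using Fin.addCases with
      | left j =>
        have : N1.mkQ (b (Fin.castAdd m j)) = 0 := by
          rw [hbl]; exact (Submodule.Quotient.mk_eq_zero N1).2 (b1 j).2
        rw [h0, this]; simp
      | right j =>
        rw [hbr, ← LinearMap.toMatrix_apply, hgM]; rfl
    exact fun v => LinearMap.congr_fun this v
  rw [← hgM, ← hb']
  constructor
  · rintro ⟨r, hr⟩
    have h0 : ∀ i j, M (Fin.natAdd p i) (Fin.castAdd m j) = 0 := by
      intro i j
      rw [hMn, hbl, ← hr]
      have : N1.mkQ (r • (b1 j : V)) = 0 :=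
        (Submodule.Quotient.mk_eq_zero N1).2 (N1.smul_mem r (b1 j).2)
      rw [this]; simp
    refine ⟨h0, r, fun w => ?_⟩
    obtain ⟨v, rfl⟩ := N1.mkQ_surjective w
    rw [← hg h0, ← hr, map_smul]
  · rintro ⟨h0, r, hr⟩
    obtain ⟨s, hs⟩ := hkey (f - Module.toModuleEnd F V r) (by
      intro v
      apply (Submodule.Quotient.mk_eq_zero N1).1
      change N1.mkQ (f v - r • v) = 0
      rw [map_sub, hg h0, map_smul, hr, sub_self])
    refine ⟨s + r, fun v => ?_⟩
    rw [add_smul, hs]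
    change f v - r • v + r • v = f v
    abel

end main

/-- Main theorem: a subalgebra of `M_n(F)` not satisfying `s_{2n-2}` is conjugate to a
full block upper triangular matrix algebra `E_{(ℓ₁,…,ℓ_t)}(F)`. -/
theorem main_classification (F : Type*) [Field F] (n : ℕ)
    (A : Subalgebra F (Matrix (Fin n) (Fin n) F))
    (hA : ∃ x : Fin (2 * n - 2) → Matrix (Fin n) (Fin n) F,
      (∀ k, x k ∈ A) ∧ stdPoly (2 * n - 2) x ≠ 0) :
    ∃ (t : ℕ) (_ : 0 < t) (ℓ : Fin t → ℕ), (∀ i, 0 < ℓ i) ∧ (∑ i, ℓ i) = n ∧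
      ∃ Q : (Matrix (Fin n) (Fin n) F)ˣ,
        (fun a => (Q : Matrix (Fin n) (Fin n) F) * a *
            ((Q⁻¹ : (Matrix (Fin n) (Fin n) F)ˣ) : Matrix (Fin n) (Fin n) F)) ''
          (A : Set (Matrix (Fin n) (Fin n) F)) =
        {M : Matrix (Fin n) (Fin n) F | BlockUT ℓ M} := by
  obtain ⟨x, hxA, hx⟩ := hA
  have hn : 0 < n := by
    rcases Nat.eq_zero_or_pos n with rfl | h
    · exact absurd (Subsingleton.elim _ _) hx
    · exact h
  let φ : A →+* Module.End F (Fin n → F) :=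
    (Matrix.toLinAlgEquiv' (R := F) (n := Fin n)).toRingEquiv.toRingHom.comp A.val.toRingHom
  have hφ : ∀ a : A, φ a = Matrix.toLin' (a : Matrix (Fin n) (Fin n) F) := fun _ => rfl
  letI : Module A (Fin n → F) := Module.compHom _ φ
  have hsm : ∀ (a : A) (v : Fin n → F), a • v = Matrix.toLin' (a : Matrix (Fin n) (Fin n) F) v :=
    fun _ _ => rfl
  have htow : IsScalarTower F A (Fin n → F) := ⟨fun c a v => by
    rw [hsm, hsm]
    simp⟩
  have hsat : ¬ Sat A (Fin n → F) (2 * n - 2) := by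
    intro h
    apply hx
    have h1 := stdPoly_map A.val.toRingHom (2 * n - 2) (fun k => (⟨x k, hxA k⟩ : A))
    have h2 : stdPoly (2 * n - 2) x = A.val.toRingHom (stdPoly (2 * n - 2) (fun k => (⟨x k, hxA k⟩ : A))) :=
      h1.symm
    rw [h2]
    apply (Matrix.toLin' (R := F) (m := Fin n) (n := Fin n)).injective
    rw [map_zero]
    apply LinearMap.ext
    intro v
    exact h _ v
  obtain ⟨t, ht, ℓ, hℓ, hsum, b, hb⟩ := @main_ind F A _ _ _ n (Fin n → F) _ _ _ htow _ (Module.finrank_fin_fun F) hn hsat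
  let e := Pi.basisFun F (Fin n)
  refine ⟨t, ht, ℓ, hℓ, hsum, ⟨b.toMatrix e, e.toMatrix b, b.toMatrix_mul_toMatrix_flip e,
    e.toMatrix_mul_toMatrix_flip b⟩, ?_⟩
  have hconj : ∀ f : (Fin n → F) →ₗ[F] (Fin n → F),
      b.toMatrix e * LinearMap.toMatrix' f * e.toMatrix b = LinearMap.toMatrix b b f := by
    intro f
    have := basis_toMatrix_mul_linearMap_toMatrix_mul_basis_toMatrix b e b e f
    rw [← this, ← LinearMap.toMatrix_eq_toMatrix']
  ext M
  simp only [Set.mem_image, Set.mem_ofPred_eq]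
  constructor
  · rintro ⟨a, ha, rfl⟩
    have h1 := hconj (Matrix.toLin' a)
    rw [LinearMap.toMatrix'_toLin'] at h1
    have h2 := (hb (Matrix.toLin' a)).1 ⟨⟨a, ha⟩, fun v => hsm _ _⟩
    rw [← h1] at h2
    exact h2
  · intro hM
    let f := Matrix.toLin b b M
    have hf : LinearMap.toMatrix b b f = M := by simp [f]
    obtain ⟨r, hr⟩ := (hb f).2 (by rw [hf]; exact hM)
    refine ⟨r, r.2, ?_⟩
    have h1 := hconj f
    rw [hf] at h1
    have h2 : LinearMap.toMatrix' f = r := by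
      have : f = Matrix.toLin' (r : Matrix (Fin n) (Fin n) F) := by
        apply LinearMap.ext
        intro v
        rw [← hr]; rfl
      rw [this, LinearMap.toMatrix'_toLin']
    rw [h2] at h1
    exact h1
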